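/- For every even k ≥ 4 and every n, the online Ramsey number satisfies r̃(C_k, P_n) ≤ 2n + 11k. -/

import Mathlib

open SimpleGraph

/-- A board state: the set of red edges and the set of blue edges. -/
abbrev Board : Type := Set (Sym2 ℕ) × Set (Sym2 ℕ)

/-- The set of already colored edges of a board. -/
def Board.colored (B : Board) : Set (Sym2 ℕ) := B.1 ∪ B.2

/-- A Builder strategy selects an edge given the current board. -/
abbrev BuilderStrat : Type := Board → Sym2 ℕ

/-- A Painter strategy colors the selected edge (true = red, false = blue). -/
abbrev PainterStrat : Type := Board → Sym2 ℕ → Bool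

/-- The board after `t` rounds of play from `init`. -/
def playGame (b : BuilderStrat) (p : PainterStrat) (init : Board) : ℕ → Board
  | 0 => init
  | t + 1 =>
      let B := playGame b p init t
      let e := b B
      if p B e then (insert e B.1, B.2) else (B.1, insert e B.2)

/-- Builder's strategy is valid from `init`: along any play it always selects a
previously unselected non-loop edge. -/
def ValidFrom (b : BuilderStrat) (init : Board) : Prop :=
  ∀ p : PainterStrat, ∀ t : ℕ,
    ¬ (b (playGame b p init t)).IsDiag ∧
      b (playGame b p init t) ∉ (playGame b p init t).colored

/-- Builder can force the winning condition `W` within `t` rounds, starting from `init`. -/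
def BuilderWinsIn (init : Board) (W : Board → Prop) (t : ℕ) : Prop :=
  ∃ b : BuilderStrat, ValidFrom b init ∧
    ∀ p : PainterStrat, ∃ s, s ≤ t ∧ W (playGame b p init s)

/-- `G` contains a copy of `H`. -/
def HasCopy {α β : Type} (H : SimpleGraph α) (G : SimpleGraph β) : Prop :=
  ∃ f : α ↪ β, ∀ x y, H.Adj x y → G.Adj (f x) (f y)

/-- The red part of the board contains a copy of `H`. -/
def RedCopy {α : Type} (H : SimpleGraph α) (B : Board) : Prop :=
  HasCopy H (fromEdgeSet B.1)

/-- The blue part of the board contains a copy of `H`. -/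
def BlueCopy {α : Type} (H : SimpleGraph α) (B : Board) : Prop :=
  HasCopy H (fromEdgeSet B.2)

/-- The empty board. -/
def emptyBoard : Board := (∅, ∅)

/-- Winning condition: a red `C_k` or a blue `C_n`. -/
def WinCC (k n : ℕ) (B : Board) : Prop :=
  RedCopy (cycleGraph k) B ∨ BlueCopy (cycleGraph n) B

/-- Winning condition: a red `C_k` or a blue path on `n` vertices. -/
def WinCP (k n : ℕ) (B : Board) : Prop :=
  RedCopy (cycleGraph k) B ∨ BlueCopy (pathGraph n) B

/-- A board consisting of a single blue cycle on the vertices `0, …, m-1`. -/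
def blueCycleBoard (m : ℕ) : Board :=
  (∅, {e | ∃ i : ℕ, i < m ∧ e = s(i, (i + 1) % m)})

/-- A board consisting of a single blue path on the vertices `0, …, m-1`. -/
def bluePathBoard (m : ℕ) : Board :=
  (∅, {e | ∃ i : ℕ, i + 1 < m ∧ e = s(i, i + 1)})

/-- The board obtained by colouring `e` red. -/
def Board.addRed (B : Board) (e : Sym2 ℕ) : Board := (insert e B.1, B.2)

/-- The board obtained by colouring `e` blue. -/
def Board.addBlue (B : Board) (e : Sym2 ℕ) : Board := (B.1, insert e B.2)

/-- Builder can force `W` from the board `B` within `t` further rounds (recursive form). -/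
def Forces (W : Board → Prop) : ℕ → Board → Prop
  | 0, B => W B
  | t + 1, B => W B ∨ ∃ e, ¬ e.IsDiag ∧ e ∉ B.colored ∧
      Forces W t (B.addRed e) ∧ Forces W t (B.addBlue e)

lemma Forces.of_win {W : Board → Prop} {B : Board} (h : W B) : ∀ t, Forces W t B
  | 0 => h
  | _ + 1 => Or.inl h

lemma Forces.succ {W : Board → Prop} : ∀ {t : ℕ} {B : Board}, Forces W t B → Forces W (t + 1) B
  | 0, _, h => Or.inl h
  | _ + 1, _, h => h.imp id fun ⟨e, h1, h2, h3, h4⟩ => ⟨e, h1, h2, h3.succ, h4.succ⟩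

lemma Forces.mono {W : Board → Prop} {s t : ℕ} {B : Board} (h : Forces W s B) (hst : s ≤ t) :
    Forces W t B := by
  induction hst with
  | refl => exact h
  | step _ ih => exact ih.succ

/-- Asking for the edge `xy` costs at most one round, even if it is already coloured. -/
lemma Forces.ask {W : Board → Prop} {t : ℕ} {B : Board} (x y : ℕ) (hxy : x ≠ y)
    (hr : Forces W t (B.addRed s(x, y))) (hb : Forces W t (B.addBlue s(x, y))) :
    Forces W (t + 1) B := by
  by_cases h : s(x, y) ∈ B.colored
  · rcases h with h | h
    · rw [Board.addRed, Set.insert_eq_of_mem h] at hr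
      exact hr.succ
    · rw [Board.addBlue, Set.insert_eq_of_mem h] at hb
      exact hb.succ
  · exact Or.inr ⟨s(x, y), by simpa using hxy, h, hr, hb⟩

/-- `e` is an optimal move on the board `B`. -/
def OptimalMove (W : Board → Prop) (B : Board) (e : Sym2 ℕ) : Prop :=
  ¬ e.IsDiag ∧ e ∉ B.colored ∧ ∃ t, Forces W t (B.addRed e) ∧ Forces W t (B.addBlue e) ∧
    ∀ s, Forces W s B → t + 1 ≤ s

open Classical in
/-- The strategy playing an optimal move when there is one, and any legal move otherwise. -/
noncomputable def optimalStrat (W : Board → Prop) : BuilderStrat := fun B =>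
  if h : ∃ e, OptimalMove W B e then h.choose
  else if h : ∃ e : Sym2 ℕ, ¬ e.IsDiag ∧ e ∉ B.colored then h.choose
  else s(0, 1)

lemma optimalStrat_optimal {W : Board → Prop} {B : Board} (h : ∃ e, OptimalMove W B e) :
    OptimalMove W B (optimalStrat W B) := by
  rw [optimalStrat, dif_pos h]
  exact h.choose_spec

lemma exists_legal_move {B : Board} (hB : B.colored.Finite) :
    ∃ e : Sym2 ℕ, ¬ e.IsDiag ∧ e ∉ B.colored := by
  have hinj : Function.Injective fun i : ℕ => s(0, i + 1) := by
    intro i j h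
    simpa using h
  obtain ⟨e, ⟨i, rfl⟩, h⟩ := (Set.infinite_range_of_injective hinj).exists_notMem_finite hB
  exact ⟨_, by simp, h⟩

lemma optimalStrat_legal (W : Board → Prop) {B : Board} (hB : B.colored.Finite) :
    ¬ (optimalStrat W B).IsDiag ∧ optimalStrat W B ∉ B.colored := by
  by_cases h : ∃ e, OptimalMove W B e
  · exact ⟨(optimalStrat_optimal h).1, (optimalStrat_optimal h).2.1⟩
  · rw [optimalStrat, dif_neg h, dif_pos (exists_legal_move hB)]
    exact (exists_legal_move hB).choose_spec

lemma playGame_colored_finite (b : BuilderStrat) (p : PainterStrat) (t : ℕ) :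
    (playGame b p emptyBoard t).colored.Finite := by
  induction t with
  | zero => simp [playGame, emptyBoard, Board.colored]
  | succ t ih =>
    refine (ih.insert (b (playGame b p emptyBoard t))).subset ?_
    simp only [playGame, Board.colored]
    split_ifs <;>
    · intro x hx
      simp only [Set.mem_union, Set.mem_insert_iff] at hx ⊢
      tauto

lemma playGame_succ_init (b : BuilderStrat) (p : PainterStrat) (B : Board) (s : ℕ) :
    playGame b p B (s + 1) = playGame b p (playGame b p B 1) s := by
  induction s with
  | zero => rfl
  | succ s ih => rw [playGame, ih, ← playGame.eq_2]

lemma Forces.optimalStrat_wins {W : Board → Prop} (p : PainterStrat) {t : ℕ} {B : Board}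
    (h : Forces W t B) : ∃ s, s ≤ t ∧ W (playGame (optimalStrat W) p B s) := by
  induction t generalizing B with
  | zero => exact ⟨0, le_rfl, h⟩
  | succ t ih =>
    by_cases ht : Forces W t B
    · obtain ⟨s, hs, hw⟩ := ih ht
      exact ⟨s, hs.trans t.le_succ, hw⟩
    have hex : ∃ e, OptimalMove W B e := by
      rcases h with h | ⟨e, h1, h2, h3, h4⟩
      · exact absurd (Forces.of_win h t) ht
      · refine ⟨e, h1, h2, t, h3, h4, fun s hs => ?_⟩
        by_contra hst
        exact ht (hs.mono (by omega))
    obtain ⟨-, -, r, hr, hb, hmin⟩ := optimalStrat_optimal hex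
    have hrt : r ≤ t := by have := hmin _ h; omega
    have hnext : Forces W t (playGame (optimalStrat W) p B 1) := by
      have hstep : playGame (optimalStrat W) p B 1 = if p B (optimalStrat W B)
          then B.addRed (optimalStrat W B) else B.addBlue (optimalStrat W B) := rfl
      rw [hstep]
      split
      · exact hr.mono hrt
      · exact hb.mono hrt
    obtain ⟨s, hs, hw⟩ := ih hnext
    exact ⟨s + 1, by omega, by rwa [playGame_succ_init]⟩

lemma Forces.builderWinsIn {W : Board → Prop} {t : ℕ} (h : Forces W t emptyBoard) :
    BuilderWinsIn emptyBoard W t :=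
  ⟨optimalStrat W, fun p s => optimalStrat_legal W (playGame_colored_finite _ p s),
    fun p => h.optimalStrat_wins p⟩

/-- Consecutive vertices of `l` are joined by red edges. -/
def Board.RedChain (B : Board) (l : List ℕ) : Prop := l.IsChain fun x y => s(x, y) ∈ B.1

/-- Consecutive vertices of `l` are joined by blue edges. -/
def Board.BlueChain (B : Board) (l : List ℕ) : Prop := l.IsChain fun x y => s(x, y) ∈ B.2

namespace Board

variable {B : Board} {l l' : List ℕ}

lemma mem_addRed_swap (B : Board) (x y : ℕ) : s(y, x) ∈ (B.addRed s(x, y)).1 :=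
  Set.mem_insert_iff.2 (Or.inl Sym2.eq_swap)

lemma mem_addBlue_swap (B : Board) (x y : ℕ) : s(y, x) ∈ (B.addBlue s(x, y)).2 :=
  Set.mem_insert_iff.2 (Or.inl Sym2.eq_swap)

lemma RedChain.addRed (h : B.RedChain l) (e : Sym2 ℕ) : (B.addRed e).RedChain l :=
  List.IsChain.imp (fun _ _ hxy => Set.mem_insert_of_mem e hxy) h

lemma RedChain.addBlue (h : B.RedChain l) (e : Sym2 ℕ) : (B.addBlue e).RedChain l := h

lemma BlueChain.addBlue (h : B.BlueChain l) (e : Sym2 ℕ) : (B.addBlue e).BlueChain l :=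
  List.IsChain.imp (fun _ _ hxy => Set.mem_insert_of_mem e hxy) h

lemma BlueChain.addRed (h : B.BlueChain l) (e : Sym2 ℕ) : (B.addRed e).BlueChain l := h

lemma RedChain.cons {x y : ℕ} (h : B.RedChain l) (hy : l.head? = some y) (hxy : s(x, y) ∈ B.1) :
    B.RedChain (x :: l) := by
  refine List.isChain_cons.2 ⟨?_, h⟩
  simpa [hy] using hxy

lemma BlueChain.cons {x y : ℕ} (h : B.BlueChain l) (hy : l.head? = some y)
    (hxy : s(x, y) ∈ B.2) : B.BlueChain (x :: l) := by
  refine List.isChain_cons.2 ⟨?_, h⟩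
  simpa [hy] using hxy

lemma RedChain.tail {x : ℕ} (h : B.RedChain (x :: l)) : B.RedChain l := List.IsChain.tail h

lemma BlueChain.tail {x : ℕ} (h : B.BlueChain (x :: l)) : B.BlueChain l := List.IsChain.tail h

lemma RedChain.left (h : B.RedChain (l ++ l')) : B.RedChain l := (List.isChain_append.1 h).1

lemma BlueChain.right (h : B.BlueChain (l ++ l')) : B.BlueChain l' := (List.isChain_append.1 h).2.1

lemma BlueChain.reverse (h : B.BlueChain l) : B.BlueChain l.reverse := by
  refine List.isChain_reverse.2 (List.IsChain.imp (fun x y hxy => ?_) h)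
  rwa [Sym2.eq_swap]

/-- Two blue chains whose heads are joined by a blue edge form a single blue chain. -/
lemma BlueChain.join {x y : ℕ} (h : B.BlueChain (x :: l)) (h' : B.BlueChain (y :: l'))
    (hxy : s(x, y) ∈ B.2) : B.BlueChain ((x :: l).reverse ++ y :: l') := by
  refine List.isChain_append.2 ⟨h.reverse, h', ?_⟩
  simpa using hxy

lemma BlueChain.winCP {k n : ℕ} (h : B.BlueChain l) (hl : l.Nodup) (hn : n ≤ l.length) :
    WinCP k n B := by
  have hinj : Function.Injective fun i : Fin n => l[i.1]'(by omega) := fun i j hij =>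
    Fin.ext ((List.Nodup.getElem_inj_iff hl).1 hij)
  refine Or.inr ⟨⟨_, hinj⟩, fun x y hxy => ?_⟩
  refine (fromEdgeSet_adj _).2 ⟨?_, fun hc => hxy.ne (hinj hc)⟩
  have hstep : ∀ i (hi : i + 1 < l.length), s(l[i], l[i + 1]) ∈ B.2 :=
    fun i hi => List.isChain_iff_getElem.1 h i hi
  simp only [Function.Embedding.coeFn_mk]
  rcases pathGraph_adj.1 hxy with hxy | hxy
  · have := hstep x (by omega)
    simpa only [hxy] using this
  · have := hstep y (by omega)
    rw [Sym2.eq_swap]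
    simpa only [hxy] using this

lemma RedChain.winCP {n x z : ℕ} (h : B.RedChain (x :: (l ++ [z]))) (hl : (x :: (l ++ [z])).Nodup)
    (hzx : s(z, x) ∈ B.1) : WinCP (l.length + 2) n B := by
  set w := x :: (l ++ [z]) with hw
  have hlen : w.length = l.length + 2 := by simp [hw]
  have hinj : Function.Injective fun i : Fin (l.length + 2) => w[i.1]'(by omega) := fun i j hij =>
    Fin.ext ((List.Nodup.getElem_inj_iff hl).1 hij)
  have hstep : ∀ i j : Fin (l.length + 2), (j - i).1 = 1 →
      s(w[i.1]'(by omega), w[j.1]'(by omega)) ∈ B.1 := by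
    intro i j hij
    have hj : j = i + 1 := by
      have : j - i = 1 := Fin.ext (by simpa using hij)
      rw [← this]; abel
    subst hj
    by_cases hi : i = Fin.last (l.length + 1)
    · subst hi
      simpa [hw] using hzx
    · have hi1 : (i + 1).1 = i.1 + 1 := Fin.val_add_one_of_lt (Fin.lt_last_iff_ne_last.2 hi)
      have hlt : i.1 < l.length + 1 := Fin.lt_last_iff_ne_last.2 hi
      have := List.isChain_iff_getElem.1 h i.1 (by omega)
      simpa only [hi1] using this
  refine Or.inl ⟨⟨_, hinj⟩, fun i j hij => ?_⟩
  refine (fromEdgeSet_adj _).2 ⟨?_, fun hc => hij.ne (hinj hc)⟩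
  rcases cycleGraph_adj'.1 hij with hij | hij
  · rw [Sym2.eq_swap]
    exact hstep j i hij
  · exact hstep i j hij

end Board

lemma List.Nodup.of_count_le {l l' : List ℕ} (h : l.Nodup)
    (hc : ∀ v, l'.count v ≤ l.count v) : l'.Nodup :=
  List.nodup_iff_count_le_one.2 fun v => (hc v).trans (List.nodup_iff_count_le_one.1 h v)

lemma List.Nodup.ne_of_count_le {l : List ℕ} (h : l.Nodup) {x y : ℕ}
    (hc : ∀ v, [x, y].count v ≤ l.count v) : x ≠ y := by
  simpa using h.of_count_le hc

/-- Two disjoint blue paths `P₁ a P₂` and `Y₁ Y₂`, together with a red path on `P₁`, `a` and `Y₁`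
which ends in the first vertex of the first blue path. -/
lemma forces_zigzag_aux {n : ℕ} (r : ℕ) : ∀ (i : ℕ) (B : Board) (P₁ P₂ Y₁ Y₂ Z Q : List ℕ)
    (a p : ℕ), P₁.length = i → Y₁.length = i → P₁ ++ a :: P₂ = p :: Q →
    B.BlueChain (P₁ ++ a :: P₂) → B.BlueChain (Y₁ ++ Y₂) →
    (P₁ ++ a :: P₂ ++ (Y₁ ++ Y₂)).Nodup → B.RedChain (Z ++ [p]) →
    (Z ++ [p]).head? = some a → (Z ++ [p]).Perm (P₁ ++ a :: Y₁) →
    n + 2 * (i + r) ≤ (P₁ ++ a :: P₂).length + (Y₁ ++ Y₂).length →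
    Forces (WinCP (2 * (i + r) + 2) n) (2 * r + 2) B := by
  induction r with
  | zero =>
    intro i B P₁ P₂ Y₁ Y₂ Z Q a p hP₁ hY₁ hPQ hP hY hnd hZ hZa hperm hlen
    have hZlen := hperm.length_eq
    have hcount := hperm.count_eq
    have hPQc := fun v => congrArg (List.count v) hPQ
    have hPQl := congrArg List.length hPQ
    simp only [List.length_append, List.length_cons, List.length_nil] at hlen hZlen hPQl
    simp only [List.count_append, List.count_cons, List.count_nil] at hcount hPQc
    rcases Y₂ with _ | ⟨y, Y₃⟩
    · refine Forces.of_win (hP.winCP (hnd.of_count_le fun v => ?_) ?_) _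
      · simp only [List.count_append, List.count_cons]; omega
      · simp at hlen ⊢; omega
    refine Forces.ask a y (hnd.ne_of_count_le fun v => ?_) ?_ ?_
    · simp only [List.count_append, List.count_cons, List.count_nil]; omega
    · have hyZ := (hZ.addRed s(a, y)).cons (x := y) hZa (Board.mem_addRed_swap _ _ _)
      have hnd' : (y :: (Z ++ [p])).Nodup := hnd.of_count_le fun v => by
        have := hcount v
        simp only [List.count_append, List.count_cons, List.count_nil]; omega
      refine Forces.ask y p (hnd'.ne_of_count_le fun v => ?_) ?_ ?_
      · simp only [List.count_append, List.count_cons, List.count_nil]; omega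
      · have := (hyZ.addRed s(y, p)).winCP (n := n) hnd' (Board.mem_addRed_swap _ _ _)
        rwa [show Z.length + 2 = 2 * (i + 0) + 2 by omega] at this
      · refine Forces.of_win (((hY.right.addRed _).addBlue _).join
          (((hPQ ▸ hP).addRed _).addBlue _) (Set.mem_insert _ _) |>.winCP
          (hnd.of_count_le fun v => ?_) ?_) _
        · have := hPQc v
          simp only [List.count_append, List.count_cons, List.count_reverse]; omega
        · simp at hlen ⊢; omega
    · refine Forces.of_win ((hP.right.addBlue _).join (hY.right.addBlue _)
        (Set.mem_insert _ _) |>.winCP (hnd.of_count_le fun v => ?_) ?_) _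
      · simp only [List.count_append, List.count_cons, List.count_reverse]; omega
      · simp at hlen ⊢; omega
  | succ r ih =>
    intro i B P₁ P₂ Y₁ Y₂ Z Q a p hP₁ hY₁ hPQ hP hY hnd hZ hZa hperm hlen
    have hlen' := hlen
    simp only [List.length_append, List.length_cons] at hlen'
    rcases Y₂ with _ | ⟨y, Y₃⟩
    · refine Forces.of_win (hP.winCP (hnd.of_count_le fun v => ?_) ?_) _
      · simp only [List.count_append, List.count_cons]; omega
      · simp at hlen' ⊢; omega
    refine Forces.ask a y (hnd.ne_of_count_le fun v => ?_) ?_ ?_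
    · simp only [List.count_append, List.count_cons, List.count_nil]; omega
    · have hyZ := (hZ.addRed s(a, y)).cons (x := y) hZa (Board.mem_addRed_swap _ _ _)
      rcases P₂ with _ | ⟨c, P₃⟩
      · refine Forces.of_win ((hY.addRed _).winCP (hnd.of_count_le fun v => ?_) ?_) _
        · simp only [List.count_append, List.count_cons]; omega
        · simp at hlen' ⊢; omega
      refine Forces.ask y c (hnd.ne_of_count_le fun v => ?_) ?_ ?_
      · simp only [List.count_append, List.count_cons, List.count_nil]; omega
      · have := ih (i + 1) ((B.addRed s(a, y)).addRed s(y, c)) (P₁ ++ [a]) P₃ (Y₁ ++ [y]) Y₃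
          (c :: y :: Z) Q c p (by simp [hP₁]) (by simp [hY₁]) (by simpa using hPQ)
          (by simpa using (hP.addRed _).addRed _) (by simpa using (hY.addRed _).addRed _)
          (by simpa using hnd)
          ((hyZ.addRed s(y, c)).cons (x := c) rfl (Board.mem_addRed_swap _ _ _)) rfl
          (List.perm_iff_count.2 fun v => by
            have := hperm.count_eq v
            simp only [List.count_append, List.count_cons, List.count_nil,
              List.cons_append] at this ⊢
            omega)
          (by simp at hlen' ⊢; omega)
        rwa [show i + 1 + r = i + (r + 1) by omega] at this
      · refine Forces.of_win (((hY.right.addRed _).addBlue _).join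
          ((hP.right.tail.addRed _).addBlue _) (Set.mem_insert _ _) |>.winCP
          (hnd.of_count_le fun v => ?_) ?_) _
        · simp only [List.count_append, List.count_cons, List.count_reverse]; omega
        · simp at hlen' ⊢; omega
    · refine Forces.of_win ((hP.right.addBlue _).join (hY.right.addBlue _)
        (Set.mem_insert _ _) |>.winCP (hnd.of_count_le fun v => ?_) ?_) _
      · simp only [List.count_append, List.count_cons, List.count_reverse]; omega
      · simp at hlen' ⊢; omega

/-- Two disjoint blue paths on `n + k - 2` vertices in total yield a win within `k` rounds. -/
lemma forces_two_paths {k n : ℕ} (hk : 2 ≤ k) (hke : Even k) {B : Board} {P Y : List ℕ}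
    (hP : B.BlueChain P) (hY : B.BlueChain Y) (hnd : (P ++ Y).Nodup)
    (hlen : n + k ≤ P.length + Y.length + 2) : Forces (WinCP k n) k B := by
  rcases P with _ | ⟨a, P⟩
  · exact Forces.of_win (hY.winCP (by simpa using hnd) (by simp at hlen; omega)) _
  · obtain ⟨m, rfl⟩ := hke
    have := forces_zigzag_aux (n := n) (m - 1) 0 B [] P [] Y [] P a a rfl rfl rfl hP hY
      (by simpa using hnd) (List.isChain_singleton _) rfl (List.Perm.refl _)
      (by simp at hlen ⊢; omega)
    rwa [show 2 * (0 + (m - 1)) + 2 = m + m by omega, show 2 * (m - 1) + 2 = m + m by omega]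
      at this

/-- A red path `Z` and blue paths `Ps`, all disjoint, with enough vertices in total. -/
structure PathSystem (k n : ℕ) (B : Board) (Z : List ℕ) (Ps : List (List ℕ)) : Prop where
  red : B.RedChain Z
  blue : ∀ P ∈ Ps, B.BlueChain P
  nodup : (Z ++ Ps.flatten).Nodup
  length_le : n + 2 * k ≤ Z.length + Ps.flatten.length + 3

namespace PathSystem

variable {k n : ℕ} {B : Board} {Z Zm P Q : List ℕ} {Ps Ps' R : List (List ℕ)} {d e x y : ℕ}

lemma addRed (h : PathSystem k n B Z Ps) (e : Sym2 ℕ) : PathSystem k n (B.addRed e) Z Ps :=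
  ⟨h.red.addRed e, fun P hP => (h.blue P hP).addRed e, h.nodup, h.length_le⟩

lemma addBlue (h : PathSystem k n B Z Ps) (e : Sym2 ℕ) : PathSystem k n (B.addBlue e) Z Ps :=
  ⟨h.red.addBlue e, fun P hP => (h.blue P hP).addBlue e, h.nodup, h.length_le⟩

lemma perm (h : PathSystem k n B Z Ps) (hp : Ps.Perm Ps') : PathSystem k n B Z Ps' :=
  ⟨h.red, fun P hP => h.blue P (hp.mem_iff.2 hP), (hp.flatten.append_left Z).nodup_iff.1 h.nodup,
    hp.flatten.length_eq ▸ h.length_le⟩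

lemma ne_head (h : PathSystem k n B Z ((x :: P) :: R)) (hd : d ∈ Z) : x ≠ d := by
  have := h.nodup
  rw [List.nodup_append] at this
  exact fun hx => this.2.2 d hd x (by simp) hx.symm

lemma cons_head (h : PathSystem k n B (d :: Z) ((x :: P) :: R)) (hx : s(x, d) ∈ B.1) :
    PathSystem k n B (x :: d :: Z) (P :: R) where
  red := h.red.cons rfl hx
  blue P' hP' := by
    rcases List.mem_cons.1 hP' with rfl | hP'
    · exact (h.blue _ List.mem_cons_self).tail
    · exact h.blue P' (List.mem_cons_of_mem _ hP')
  nodup := h.nodup.of_count_le fun v => by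
    simp only [List.flatten_cons, List.count_append, List.count_cons]; omega
  length_le := by
    have := h.length_le
    simp only [List.flatten_cons, List.length_append, List.length_cons] at this ⊢; omega

lemma singleton_head (h : PathSystem k n B [] ((x :: P) :: R)) :
    PathSystem k n B [x] (P :: R) where
  red := List.isChain_singleton _
  blue P' hP' := by
    rcases List.mem_cons.1 hP' with rfl | hP'
    · exact (h.blue _ List.mem_cons_self).tail
    · exact h.blue P' (List.mem_cons_of_mem _ hP')
  nodup := h.nodup.of_count_le fun v => by
    simp only [List.flatten_cons, List.count_append, List.count_cons]; omega
  length_le := by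
    have := h.length_le
    simp only [List.flatten_cons, List.length_append, List.length_cons] at this ⊢; omega

lemma merge (h : PathSystem k n B Z ((x :: P) :: (y :: Q) :: R)) (hZm : B.RedChain Zm)
    (hp : Z.Perm (d :: Zm)) (hx : s(x, d) ∈ B.2) (hy : s(y, d) ∈ B.2) :
    PathSystem k n B Zm (((y :: Q).reverse ++ d :: x :: P) :: R) where
  red := hZm
  blue P' hP' := by
    rcases List.mem_cons.1 hP' with rfl | hP'
    · exact (h.blue (y :: Q) (by simp)).join
        ((h.blue (x :: P) (by simp)).cons rfl (Sym2.eq_swap ▸ hx)) hy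
    · exact h.blue P' (by simp [hP'])
  nodup := h.nodup.of_count_le fun v => by
    have := hp.count_eq v
    simp only [List.flatten_cons, List.count_append, List.count_cons, List.count_reverse]
      at this ⊢
    omega
  length_le := by
    have := h.length_le
    have := hp.length_eq
    simp only [List.flatten_cons, List.length_append, List.length_cons, List.length_reverse]
      at *
    omega

/-- If two blue paths are joined in red to the first vertex of a red path on `k - 1` vertices,
then they can be merged through the last vertex of the red path. -/
lemma merge_last {T : ℕ} (h : PathSystem k n B (d :: (Zm ++ [e])) ((x :: P) :: (y :: Q) :: R))
    (hk : Zm.length + 3 = k) (hx : s(x, d) ∈ B.1) (hy : s(y, d) ∈ B.1)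
    (hT : ∀ B' S, PathSystem k n B' (d :: Zm) (S :: R) → Forces (WinCP k n) T B') :
    Forces (WinCP k n) (T + 2) B := by
  have hswap := h.perm (List.Perm.swap _ _ _)
  have win {B' : Board} {v : ℕ} {P' : List ℕ} {R' : List (List ℕ)}
      (h' : PathSystem k n B' (d :: (Zm ++ [e])) ((v :: P') :: R')) (hd : s(v, d) ∈ B'.1)
      (he : s(v, e) ∈ B'.1) : WinCP k n B' := by
    have := Board.RedChain.winCP (n := n) (l := d :: Zm) (x := v) (z := e) (h'.cons_head hd).red
      (h'.nodup.of_count_le fun w => by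
        simp only [List.flatten_cons, List.count_append, List.count_cons]; omega)
      (Sym2.eq_swap ▸ he)
    rwa [List.length_cons, show Zm.length + 1 + 2 = k by omega] at this
  refine Forces.ask x e (h.ne_head (by simp)) (Forces.of_win (win (h.addRed _)
    (Set.mem_insert_of_mem _ hx) (Set.mem_insert _ _)) _) ?_
  refine Forces.ask y e (hswap.ne_head (by simp)) (Forces.of_win (win
    ((hswap.addBlue _).addRed _) (Set.mem_insert_of_mem _ hy) (Set.mem_insert _ _)) _) ?_
  refine hT _ _ (((h.addBlue _).addBlue _).merge (d := e) ?_ ?_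
    (Set.mem_insert_of_mem _ (Set.mem_insert _ _)) (Set.mem_insert _ _))
  · exact ((h.addBlue _).addBlue _).red.left (l := d :: Zm) (l' := [e])
  · exact List.perm_append_singleton e (d :: Zm)

/-- With a red path on `k - 1` vertices, two of three blue paths can be merged in five rounds. -/
lemma merge_of_three {T w : ℕ} {S : List ℕ}
    (h : PathSystem k n B (d :: (Zm ++ [e])) ((x :: P) :: (y :: Q) :: (w :: S) :: R))
    (hk : Zm.length + 3 = k)
    (hT : ∀ B' Z' P' Q', Z'.length + 2 = k → PathSystem k n B' Z' (P' :: Q' :: R) →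
      Forces (WinCP k n) T B') :
    Forces (WinCP k n) (T + 5) B := by
  have hyx := h.perm (List.Perm.swap _ _ _)
  have hxwy := h.perm (List.Perm.cons _ (List.Perm.swap _ _ _))
  have hywx := hyx.perm (List.Perm.cons _ (List.Perm.swap _ _ _))
  have hwx := hxwy.perm (List.Perm.swap _ _ _)
  have hlen : (Zm ++ [e]).length + 2 = k := by simp; omega
  have hT' : ∀ Q' B' P', PathSystem k n B' (d :: Zm) (P' :: Q' :: R) →
      Forces (WinCP k n) T B' := fun Q' B' P' => hT B' _ P' Q' (by simp; omega)
  refine Forces.ask x d (h.ne_head (by simp)) ?_ ?_ <;>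
  refine Forces.ask y d (hyx.ne_head (by simp)) ?_ ?_
  · exact (((h.addRed _).addRed _).merge_last hk (by simp [Board.addRed])
      (by simp [Board.addRed]) (hT' _)).succ
  · refine Forces.ask w d (hwx.ne_head (by simp)) ?_ ?_
    · exact (((hxwy.addRed _).addBlue _).addRed _).merge_last hk
        (by simp [Board.addRed, Board.addBlue]) (by simp [Board.addRed, Board.addBlue]) (hT' _)
    · have h' := ((hywx.addRed s(x, d)).addBlue s(y, d)).addBlue s(w, d)
      exact (hT _ _ _ _ hlen (h'.merge h'.red.tail (List.Perm.refl _)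
        (by simp [Board.addRed, Board.addBlue]) (by simp [Board.addRed, Board.addBlue]))).mono
        (by omega)
  · refine Forces.ask w d (hwx.ne_head (by simp)) ?_ ?_
    · exact (((hywx.addBlue _).addRed _).addRed _).merge_last hk
        (by simp [Board.addRed, Board.addBlue]) (by simp [Board.addRed, Board.addBlue]) (hT' _)
    · have h' := ((hxwy.addBlue s(x, d)).addRed s(y, d)).addBlue s(w, d)
      exact (hT _ _ _ _ hlen (h'.merge h'.red.tail (List.Perm.refl _)
        (by simp [Board.addRed, Board.addBlue]) (by simp [Board.addRed, Board.addBlue]))).mono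
        (by omega)
  · have h' := (h.addBlue s(x, d)).addBlue s(y, d)
    exact (hT _ _ _ _ hlen (h'.merge h'.red.tail (List.Perm.refl _)
      (by simp [Board.addBlue]) (by simp [Board.addBlue]))).mono (by omega)

/-- Builder wins quickly from a path system with few paths. -/
lemma forces (hk : 4 ≤ k) (hke : Even k) (μ : ℕ) : ∀ (T : ℕ) (B : Board) (Z : List ℕ)
    (Ps : List (List ℕ)), PathSystem k n B Z Ps → Z.length + 1 ≤ k →
    2 * k + 7 * Ps.length ≤ μ + 2 * Z.length + 2 → μ + k ≤ T + 14 → k ≤ T →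
    Forces (WinCP k n) T B := by
  induction μ using Nat.strong_induction_on with
  | _ μ ih =>
    intro T B Z Ps h hZ hμ hT hkT
    have hlen := h.length_le
    have drop : ∀ R, Ps.Perm ([] :: R) → Forces (WinCP k n) T B := by
      intro R hp
      have h' := h.perm hp
      have hl := hp.length_eq
      rw [List.length_cons] at hl
      exact ih (μ - 7) (by omega) T B Z R
        ⟨h'.red, fun P hP => h'.blue P (List.mem_cons_of_mem _ hP), h'.nodup, h'.length_le⟩
        hZ (by omega) (by omega) hkT
    match Ps, h, hμ, hlen, drop with
    | [], h, hμ, hlen, drop => simp at hlen; omega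
    | [P], h, hμ, hlen, drop =>
      refine Forces.of_win ((h.blue P (by simp)).winCP (h.nodup.of_count_le fun v => ?_) ?_) T
      · simp
      · simp at hlen; omega
    | [P, Q], h, hμ, hlen, drop =>
      refine (forces_two_paths (by omega) hke (h.blue P (by simp)) (h.blue Q (by simp))
        (h.nodup.of_count_le fun v => ?_) ?_).mono hkT
      · simp
      · simp at hlen; omega
    | [] :: R, h, hμ, hlen, drop => exact drop R (List.Perm.refl _)
    | P :: [] :: R, h, hμ, hlen, drop => exact drop (P :: R) (List.Perm.swap _ _ _)
    | P :: Q :: [] :: R, h, hμ, hlen, drop =>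
      exact drop (P :: Q :: R) (List.perm_middle (l₁ := [P, Q]))
    | (x :: P) :: (y :: Q) :: (w :: S) :: R, h, hμ, hlen, drop =>
      simp only [List.length_cons] at hμ
      obtain ⟨T, rfl⟩ : ∃ T', T = T' + 5 := ⟨T - 5, by omega⟩
      rcases Z with _ | ⟨d, Z⟩
      · exact ih (μ - 2) (by omega) _ B _ _ h.singleton_head (by simp; omega)
          (by simp at hμ ⊢; omega) (by omega) hkT
      simp only [List.length_cons] at hZ hμ
      by_cases hfull : Z.length + 2 = k
      · rcases List.eq_nil_or_concat Z with rfl | ⟨Zm, e, rfl⟩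
        · simp at hfull; omega
        simp only [List.concat_eq_append, List.length_append, List.length_cons, List.length_nil] at *
        refine h.merge_of_three (by omega) fun B' Z' P' Q' hZ' h' => ?_
        exact ih (μ - 5) (by omega) T B' Z' _ h' (by omega) (by simp; omega) (by omega) (by omega)
      · have hyx := h.perm (List.Perm.swap _ _ _)
        refine Forces.ask x d (h.ne_head (by simp)) ?_ ?_
        · exact ih (μ - 2) (by omega) _ _ _ _
            ((h.addRed s(x, d)).cons_head (Set.mem_insert _ _)) (by simp; omega)
            (by simp; omega) (by omega) (by omega)
        · refine Forces.ask y d (hyx.ne_head (by simp)) ?_ ?_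
          · exact ih (μ - 2) (by omega) _ _ _ _
              (((hyx.addBlue s(x, d)).addRed s(y, d)).cons_head (Set.mem_insert _ _))
              (by simp; omega) (by simp; omega) (by omega) (by omega)
          · have h' := (h.addBlue s(x, d)).addBlue s(y, d)
            exact ih (μ - 5) (by omega) _ _ _ _ (h'.merge h'.red.tail (List.Perm.refl _)
              (Set.mem_insert_of_mem _ (Set.mem_insert _ _)) (Set.mem_insert _ _))
              (by omega) (by simp; omega) (by omega) (by omega)

end PathSystem

/-- The vertices of a list of paths, each of which is given by its first vertex and its tail. -/
def pathVertices (Ls : List (ℕ × List ℕ)) : List ℕ := Ls.flatMap fun p => p.1 :: p.2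

@[simp] lemma pathVertices_nil : pathVertices [] = [] := rfl

@[simp] lemma pathVertices_cons (p : ℕ × List ℕ) (Ls : List (ℕ × List ℕ)) :
    pathVertices (p :: Ls) = p.1 :: p.2 ++ pathVertices Ls := rfl

@[simp] lemma pathVertices_append (Ls Ls' : List (ℕ × List ℕ)) :
    pathVertices (Ls ++ Ls') = pathVertices Ls ++ pathVertices Ls' := List.flatMap_append

lemma pathVertices_perm (Ls : List (ℕ × List ℕ)) :
    (pathVertices Ls).Perm (Ls.map Prod.fst ++ (Ls.map Prod.snd).flatten) := by
  induction Ls with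
  | nil => rfl
  | cons p Ls ih =>
    refine List.perm_iff_count.2 fun v => ?_
    have := ih.count_eq v
    simp only [pathVertices_cons, List.map_cons, List.flatten_cons, List.count_append,
      List.count_cons] at this ⊢
    omega

/-- Disjoint blue paths, given by their first vertices and their tails, whose first vertices form
a red path. -/
structure Comb (B : Board) (Ls : List (ℕ × List ℕ)) : Prop where
  red : B.RedChain (Ls.map Prod.fst)
  blue : ∀ p ∈ Ls, B.BlueChain (p.1 :: p.2)
  nodup : (pathVertices Ls).Nodup

namespace Comb

variable {k n : ℕ} {B : Board} {Ls Ls' : List (ℕ × List ℕ)} {F L : List ℕ} {q x y : ℕ}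

lemma addRed (h : Comb B Ls) (e : Sym2 ℕ) : Comb (B.addRed e) Ls :=
  ⟨h.red.addRed e, fun p hp => (h.blue p hp).addRed e, h.nodup⟩

lemma addBlue (h : Comb B Ls) (e : Sym2 ℕ) : Comb (B.addBlue e) Ls :=
  ⟨h.red.addBlue e, fun p hp => (h.blue p hp).addBlue e, h.nodup⟩

lemma left (h : Comb B (Ls ++ Ls')) : Comb B Ls where
  red := by
    have := h.red
    rw [List.map_append] at this
    exact this.left
  blue p hp := h.blue p (List.mem_append_left _ hp)
  nodup := by
    have := h.nodup
    rw [pathVertices_append] at this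
    exact this.of_append_left

lemma tail (h : Comb B ((q, L) :: Ls)) : Comb B Ls where
  red := h.red.tail
  blue p hp := h.blue p (List.mem_cons_of_mem _ hp)
  nodup := by
    have := h.nodup
    rw [pathVertices_cons] at this
    exact this.of_append_right

lemma singleton (hF : B.BlueChain (x :: F)) (hnd : (x :: F).Nodup) : Comb B [(x, F)] where
  red := List.isChain_singleton _
  blue p hp := by
    rw [List.mem_singleton.1 hp]
    exact hF
  nodup := by simpa [pathVertices] using hnd

lemma cons (h : Comb B ((q, L) :: Ls)) (hF : B.BlueChain (x :: F))
    (hnd : (pathVertices ((q, L) :: Ls) ++ x :: F).Nodup) (hx : s(x, q) ∈ B.1) :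
    Comb B ((x, F) :: (q, L) :: Ls) where
  red := h.red.cons rfl hx
  blue p hp := by
    rcases List.mem_cons.1 hp with rfl | hp
    · exact hF
    · exact h.blue p hp
  nodup := hnd.of_count_le fun v => by
    simp only [pathVertices_cons, List.count_append, List.count_cons]; omega

lemma pathSystem (h : Comb B Ls) (hF : B.BlueChain F) (hnd : (pathVertices Ls ++ F).Nodup)
    (hlen : n + 2 * k ≤ (pathVertices Ls).length + F.length + 3) :
    PathSystem k n B (Ls.map Prod.fst) (F :: Ls.map Prod.snd) where
  red := h.red
  blue P hP := by
    rcases List.mem_cons.1 hP with rfl | hP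
    · exact hF
    · obtain ⟨p, hp, rfl⟩ := List.mem_map.1 hP
      exact (h.blue p hp).tail
  nodup := hnd.of_count_le fun v => by
    have := (pathVertices_perm Ls).count_eq v
    simp only [List.flatten_cons, List.count_append] at this ⊢
    omega
  length_le := by
    have := (pathVertices_perm Ls).length_eq
    simp only [List.flatten_cons, List.length_append] at this ⊢
    omega

/-- Builder's main strategy: keep asking for the edge between the first vertex of the comb and an
end of a blue path `x F` disjoint from the comb. -/
lemma forces (hk : 4 ≤ k) (hke : Even k) (T : ℕ) : ∀ (B : Board) (Ls : List (ℕ × List ℕ))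
    (x : ℕ) (F : List ℕ), Comb B Ls → B.BlueChain (x :: F) →
    (pathVertices Ls ++ x :: F).Nodup → Ls ≠ [] → Ls.length + 1 ≤ k →
    (F = [] ∨ Ls.length + 2 ≤ k) → (pathVertices Ls).length + F.length + 4 ≤ n + 2 * k →
    2 * n + 11 * k + Ls.length + 1 ≤ T + 2 * (pathVertices Ls).length + 2 * F.length →
    Forces (WinCP k n) T B := by
  induction T using Nat.strong_induction_on with
  | _ T ih =>
    intro B Ls x F h hF hnd hne hLs hFk hV hT
    by_cases hfull : (pathVertices Ls).length + F.length + 4 = n + 2 * k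
    · exact (h.pathSystem hF hnd (by simp; omega)).forces hk hke (T + 14 - k) T B _ _
        (by simpa using hLs) (by simp; omega) (by omega) (by omega)
    have fresh : ∀ S B' Ls', S < T → Comb B' Ls' → Ls' ≠ [] → Ls'.length + 1 ≤ k →
        (pathVertices Ls').length = (pathVertices Ls).length + F.length + 1 →
        T + Ls'.length ≤ Ls.length + S + 2 → Forces (WinCP k n) S B' := by
      intro S B' Ls' hS h' hne' hLs' hlen hcost
      obtain ⟨z, hz⟩ := Infinite.exists_notMem_finset (pathVertices Ls').toFinset
      refine ih S hS B' Ls' z [] h' (List.isChain_singleton _) ?_ hne' hLs' (Or.inl rfl) ?_ ?_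
      · refine h'.nodup.append (List.nodup_singleton z) ?_
        simpa using hz
      · simp; omega
      · simp; omega
    obtain ⟨⟨q, L⟩, R, rfl⟩ := List.exists_cons_of_ne_nil hne
    simp only [pathVertices_cons, List.length_append, List.length_cons] at *
    obtain ⟨T, rfl⟩ : ∃ T', T = T' + 2 := ⟨T - 2, by omega⟩
    refine Forces.ask x q (hnd.ne_of_count_le fun v => ?_) ?_ ?_
    · simp only [List.count_append, List.count_cons, List.count_nil]; omega
    · have h' := (h.addRed s(x, q)).cons (hF.addRed _) hnd (Set.mem_insert _ _)
      by_cases hclose : R.length + 2 = k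
      · obtain rfl : F = [] := hFk.resolve_right (by omega)
        rcases List.eq_nil_or_concat R with rfl | ⟨R', ⟨z, L'⟩, rfl⟩
        · simp at hclose; omega
        simp only [List.concat_eq_append, List.length_append, List.length_cons, List.length_nil,
          pathVertices_append, pathVertices_cons, pathVertices_nil] at *
        refine Forces.ask x z (hnd.ne_of_count_le fun v => ?_) ?_ ?_
        · simp only [List.count_append, List.count_cons, List.count_nil]; omega
        · have hr := (h'.addRed s(x, z)).red
          have hn := ((pathVertices_perm _).nodup_iff.1 h'.nodup).of_append_left
          simp only [List.map_cons, List.map_append, List.map_nil] at hr hn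
          have := Board.RedChain.winCP (n := n) (l := q :: R'.map Prod.fst) hr hn
            (Board.mem_addRed_swap _ _ _)
          rw [List.length_cons, List.length_map, show R'.length + 1 + 2 = k by omega] at this
          exact Forces.of_win this _
        · have hc := (h'.addBlue s(x, z)).left (Ls := (x, []) :: (q, L) :: R')
          refine fresh T _ ((x, z :: L') :: (q, L) :: R') (by omega) ⟨hc.red, ?_, ?_⟩ (by simp)
            (by simp; omega) (by simp; omega) (by simp; omega)
          · intro p hp
            rcases List.mem_cons.1 hp with rfl | hp
            · exact ((h'.addBlue s(x, z)).blue (z, L') (by simp)).cons rfl (Set.mem_insert _ _)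
            · exact hc.blue p (List.mem_cons_of_mem _ hp)
          · refine hnd.of_count_le fun v => ?_
            simp only [pathVertices_cons, List.count_append, List.count_cons, List.count_nil]
            omega
      · exact fresh (T + 1) _ _ (by omega) h' (by simp) (by simp; omega)
          (by simp; omega) (by simp; omega)
    · have hq := (h.addBlue s(x, q)).blue (q, L) List.mem_cons_self
      rcases L with _ | ⟨y, L⟩
      · refine fresh (T + 1) _ ((q, x :: F) :: R) (by omega) ⟨(h.addBlue _).red, ?_, ?_⟩ (by simp)
          (by simp; omega) (by simp; omega) (by simp; omega)
        · intro p hp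
          rcases List.mem_cons.1 hp with rfl | hp
          · exact (hF.addBlue _).cons rfl (Board.mem_addBlue_swap _ _ _)
          · exact (h.addBlue _).blue p (List.mem_cons_of_mem _ hp)
        · refine hnd.of_count_le fun v => ?_
          simp only [pathVertices_cons, List.count_append, List.count_cons, List.count_nil]
          omega
      · obtain ⟨z, M, hM⟩ : ∃ z M, (q :: y :: L).reverse ++ x :: F = z :: M :=
          List.exists_cons_of_ne_nil (by simp)
        have hMb : (B.addBlue s(x, q)).BlueChain (z :: M) :=
          hM ▸ hq.join (hF.addBlue _) (Board.mem_addBlue_swap _ _ _)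
        have hMc := fun v => congrArg (List.count v) hM
        have hMl := congrArg List.length hM
        simp only [List.count_append, List.count_reverse, List.count_cons] at hMc
        simp only [List.length_append, List.length_reverse, List.length_cons] at hMl hT hV
        rcases R with _ | ⟨r, R⟩
        · refine fresh (T + 1) _ [(z, M)] (by omega) (singleton hMb (hnd.of_count_le fun v => ?_))
            (by simp) (by simp; omega) (by simp; omega) (by simp)
          have := hMc v
          simp only [List.count_append, List.count_cons]
          omega
        · refine ih (T + 1) (by omega) _ (r :: R) z M (h.addBlue _).tail hMb
            (hnd.of_count_le fun v => ?_) (by simp) (by simp at hLs ⊢; omega)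
            (Or.inr (by simp at hLs ⊢; omega)) ?_ ?_
          · have := hMc v
            simp only [List.count_append, List.count_cons]
            omega
          · omega
          · simp only [List.length_cons] at *
            omega

end Comb

/-- For every even `k ≥ 4` and every `n`, `r̃(C_k, P_n) ≤ 2n + 11k`. -/
theorem online_ramsey_even_cycle_path (k n : ℕ) (hk : 4 ≤ k) (hke : Even k) :
    BuilderWinsIn emptyBoard (WinCP k n) (2 * n + 11 * k) := by
  refine Forces.builderWinsIn (Comb.forces hk hke _ emptyBoard [(0, [])] 1 []
    (Comb.singleton (List.isChain_singleton _) (List.nodup_singleton _))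
    (List.isChain_singleton _) ?_ ?_ ?_ ?_ ?_ ?_) <;> simp <;> omega
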